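/- (Corollary 1, controllability form: V_c = Y_c².) Assume each per-column feasible set C_i, i = 1,…,Nx, is nonempty, dim (K_1 + … + K_{Nx}) = dim S(0), A is invertible, and the controllability Gramian W_c = Σ_{i=0}^{T−1} A^i B Bᵀ (Aᵀ)^i is invertible. Define the constrained minimum control energy h_T(x0) := inf { Σ_{t=0}^{T−1} ‖u(t)‖² : (x,u) ∈ T(x0) }. Then the Lebesgue volume of the set { A^T x0 : x0 ∈ ℝ^{Nx}, h_T(x0) ≤ 1 } equals √(det W_c) times the volume of the Euclidean unit ball in ℝ^{Nx}; i.e., the constrained controllability Y_c satisfies Y_c² = det W_c = V_c, the unconstrained classical controllability. -/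

import Mathlib

open Matrix Finset MeasureTheory

/-!
If no coordinate of `x₀` vanishes, every trajectory in `S(x₀)` is a superposition of constrained
columns: its difference from one such superposition lies in `S(0) = K₁ + … + K_{Nx}`, and the
`K_i`-component of the difference, divided by `x₀ i`, can be added to the `i`-th column. Hence
`T(x₀) = S(x₀)` for almost every `x₀`, and there the constrained minimum energy is the
least-squares value `⟨y, W_c⁻¹ y⟩` with `y = A^T x₀`. Up to a null set, the set to be measured is
therefore the ellipsoid `⟨y, W_c⁻¹ y⟩ ≤ 1`.
-/

section SuperposedColumns

variable {ι 𝕜 V : Type*} [Fintype ι] [DecidableEq ι]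

theorem sum_smul_mem_and_map_eq [Semiring 𝕜] [AddCommMonoid V] [Module 𝕜 V]
    {D : Submodule 𝕜 V} {π : V →ₗ[𝕜] ι → 𝕜} {f : ι → V}
    (hf : ∀ i, f i ∈ D ∧ π (f i) = Pi.single i 1) (x : ι → 𝕜) :
    ∑ i, x i • f i ∈ D ∧ π (∑ i, x i • f i) = x := by
  refine ⟨D.sum_mem fun i _ => D.smul_mem _ (hf i).1, ?_⟩
  simp only [map_sum, map_smul, (hf _).2]
  exact (pi_eq_sum_univ' x).symm

variable [DivisionRing 𝕜] [AddCommGroup V] [Module 𝕜 V] {D : Submodule 𝕜 V} {M : ι → Submodule 𝕜 V}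
  {π : V →ₗ[𝕜] ι → 𝕜}

theorem exists_columns_eq_sum_smul_iff
    (hcolumns : ∀ i, ∃ s, (s ∈ D ∧ π s = Pi.single i 1) ∧ s ∈ M i)
    (hdirections : D ⊓ π.ker ≤ ⨆ i, D ⊓ π.ker ⊓ M i)
    {x : ι → 𝕜} (hx : ∀ i, x i ≠ 0) {s : V} :
    (∃ f : ι → V, (∀ i, (f i ∈ D ∧ π (f i) = Pi.single i 1) ∧ f i ∈ M i) ∧
        s = ∑ i, x i • f i) ↔
      s ∈ D ∧ π s = x := by
  constructor
  · rintro ⟨f, hf, rfl⟩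
    exact sum_smul_mem_and_map_eq (fun i => (hf i).1) x
  · rintro ⟨hsD, hsx⟩
    choose g hg hgM using hcolumns
    obtain ⟨hgD, hgx⟩ := sum_smul_mem_and_map_eq hg x
    have hdiff : s - ∑ i, x i • g i ∈ D ⊓ π.ker :=
      ⟨D.sub_mem hsD hgD, LinearMap.sub_mem_ker_iff.2 (hsx.trans hgx.symm)⟩
    obtain ⟨k, hk, hksum⟩ :=
      (Submodule.mem_iSup_iff_exists_finsupp _ _).1 (hdirections hdiff)
    rw [Finsupp.sum_fintype _ _ fun _ => rfl] at hksum
    refine ⟨fun i => g i + (x i)⁻¹ • k i, fun i => ⟨⟨?_, ?_⟩, ?_⟩, ?_⟩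
    · exact D.add_mem (hg i).1 (D.smul_mem _ (hk i).1.1)
    · rw [map_add, map_smul, LinearMap.mem_ker.1 (hk i).1.2, smul_zero, add_zero, (hg i).2]
    · exact (M i).add_mem (hgM i) ((M i).smul_mem _ (hk i).2)
    · simp only [smul_add, smul_inv_smul₀ (hx _), sum_add_distrib, hksum, add_sub_cancel]

end SuperposedColumns

section LeastSquares

variable {n p : Type*} [Fintype p]

theorem isLeast_dotProduct_self_of_mulVec_eq [Fintype n] [DecidableEq n] {G : Matrix n p ℝ}
    (hG : IsUnit (G * Gᵀ).det) (y : n → ℝ) :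
    IsLeast {e | ∃ u : p → ℝ, G *ᵥ u = y ∧ e = u ⬝ᵥ u} (y ⬝ᵥ (G * Gᵀ)⁻¹ *ᵥ y) := by
  set z := (G * Gᵀ)⁻¹ *ᵥ y with hz
  have hsolution : G *ᵥ (Gᵀ *ᵥ z) = y := by
    rw [mulVec_mulVec, hz, mulVec_mulVec, mul_nonsing_inv _ hG, one_mulVec]
  have hcross {u : p → ℝ} (hu : G *ᵥ u = y) : u ⬝ᵥ Gᵀ *ᵥ z = y ⬝ᵥ z := by
    rw [mulVec_transpose, dotProduct_comm, ← dotProduct_mulVec, hu, dotProduct_comm]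
  refine ⟨⟨Gᵀ *ᵥ z, hsolution, (hcross hsolution).symm⟩, ?_⟩
  rintro _ ⟨u, hu, rfl⟩
  have hgap : (u - Gᵀ *ᵥ z) ⬝ᵥ (u - Gᵀ *ᵥ z) = u ⬝ᵥ u - y ⬝ᵥ z := by
    simp only [sub_dotProduct, dotProduct_sub, dotProduct_comm (Gᵀ *ᵥ z) u, hcross hu,
      hcross hsolution]
    ring
  have hgap_nonneg : 0 ≤ (u - Gᵀ *ᵥ z) ⬝ᵥ (u - Gᵀ *ᵥ z) :=
    sum_nonneg fun _ _ => mul_self_nonneg _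
  linarith

theorem posDef_mul_transpose_self_of_mulVec_surjective [Finite n] {G : Matrix n p ℝ}
    (hG : Function.Surjective G.mulVec) : (G * Gᵀ).PosDef := by
  classical
  cases nonempty_fintype n
  obtain ⟨H, hGH⟩ := mulVec_surjective_iff_exists_right_inverse.1 hG
  have hinj : Function.Injective fun v => v ᵥ* G :=
    Function.LeftInverse.injective (g := fun w => w ᵥ* H) fun v => by
      simp only [vecMul_vecMul, hGH, vecMul_one]
  simpa only [conjTranspose_eq_transpose_of_trivial] using PosDef.mul_conjTranspose_self G hinj

end LeastSquares

section Volume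

variable {n : Type*} [Fintype n]

open scoped MatrixOrder Matrix.Norms.L2Operator in
theorem exists_eq_transpose_mul_self_of_posSemidef {Q : Matrix n n ℝ} (hQ : Q.PosSemidef) :
    ∃ L : Matrix n n ℝ, Q = Lᵀ * L := by
  classical
  obtain ⟨L, hL⟩ := CStarAlgebra.nonneg_iff_eq_star_mul_self.1 hQ.nonneg
  exact ⟨L, by rwa [star_eq_conjTranspose, conjTranspose_eq_transpose_of_trivial] at hL⟩

variable [DecidableEq n]

theorem volume_dotProduct_mulVec_le_one {Q : Matrix n n ℝ} (hQ : Q.PosDef) :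
    volume {y : EuclideanSpace ℝ n | y.ofLp ⬝ᵥ Q *ᵥ y.ofLp ≤ 1} =
      ENNReal.ofReal (√Q.det)⁻¹ * volume (Metric.closedBall (0 : EuclideanSpace ℝ n) 1) := by
  obtain ⟨L, rfl⟩ := exists_eq_transpose_mul_self_of_posSemidef hQ.posSemidef
  have hdet : (Lᵀ * L).det = L.det ^ 2 := by rw [det_mul, det_transpose, sq]
  have hLdet : L.det ≠ 0 := pow_ne_zero_iff two_ne_zero |>.1 (hdet ▸ hQ.det_pos.ne')
  have hdet_toLpLin : LinearMap.det (toLpLin 2 2 L) = L.det := by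
    rw [toLpLin_eq_toLin, LinearMap.det_toLin]
  have hellipsoid : {y : EuclideanSpace ℝ n | y.ofLp ⬝ᵥ (Lᵀ * L) *ᵥ y.ofLp ≤ 1} =
      toLpLin 2 2 L ⁻¹' Metric.closedBall 0 1 := by
    ext y
    have hnorm : y.ofLp ⬝ᵥ (Lᵀ * L) *ᵥ y.ofLp = ‖toLpLin 2 2 L y‖ ^ 2 := by
      rw [EuclideanSpace.real_norm_sq_eq, ← mulVec_mulVec, dotProduct_mulVec, vecMul_transpose]
      simp only [dotProduct, sq, ofLp_toLpLin, toLin'_apply]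
    rw [Set.mem_preimage, mem_closedBall_zero_iff, ← sq_le_one_iff₀ (norm_nonneg _), ← hnorm]
    rfl
  rw [hellipsoid, Measure.addHaar_preimage_linearMap _ (hdet_toLpLin ▸ hLdet),
    hdet_toLpLin, hdet, Real.sqrt_sq_eq_abs, abs_inv]

theorem ae_linearMap_apply_ne_zero {E : Type*} [NormedAddCommGroup E] [NormedSpace ℝ E]
    [MeasurableSpace E] [BorelSpace E] [FiniteDimensional ℝ E] (μ : Measure E)
    [μ.IsAddHaarMeasure] {φ : E →ₗ[ℝ] ℝ} (hφ : φ ≠ 0) : ∀ᵐ y ∂μ, φ y ≠ 0 := by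
  have hker : μ φ.ker = 0 := μ.addHaar_submodule φ.ker (mt LinearMap.ker_eq_top.1 hφ)
  exact measure_eq_zero_iff_ae_notMem.1 hker

theorem ae_forall_mulVec_apply_ne_zero {N : Matrix n n ℝ} (hN : IsUnit N) :
    ∀ᵐ y : EuclideanSpace ℝ n, ∀ i, (N *ᵥ y.ofLp) i ≠ 0 := by
  rw [ae_all_iff]
  intro i
  let rowFunctional : EuclideanSpace ℝ n →ₗ[ℝ] ℝ :=
    LinearMap.proj i ∘ₗ toLin' N ∘ₗ (WithLp.linearEquiv 2 ℝ (n → ℝ)).toLinearMap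
  have hrow : rowFunctional ≠ 0 := by
    obtain ⟨v, hv⟩ := mulVec_surjective_iff_isUnit.2 hN (Pi.single i 1)
    intro h
    have hone : rowFunctional (WithLp.toLp 2 v) = 1 := by simp [rowFunctional, hv]
    rw [h, LinearMap.zero_apply] at hone
    exact zero_ne_one hone
  exact ae_linearMap_apply_ne_zero volume hrow

theorem volume_mulVec_image_sublevel_of_eq_dotProduct {h : (n → ℝ) → ℝ} {N Q : Matrix n n ℝ}
    (hN : IsUnit N) (hQ : Q.PosDef)
    (hh : ∀ x, (∀ i, x i ≠ 0) → h x = (N *ᵥ x) ⬝ᵥ Q *ᵥ (N *ᵥ x)) :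
    volume {y : EuclideanSpace ℝ n | ∃ x, y.ofLp = N *ᵥ x ∧ h x ≤ 1} =
      ENNReal.ofReal (√Q.det)⁻¹ * volume (Metric.closedBall (0 : EuclideanSpace ℝ n) 1) := by
  have hNdet : IsUnit N.det := (isUnit_iff_isUnit_det N).1 hN
  rw [← volume_dotProduct_mulVec_le_one hQ]
  refine measure_congr ?_
  filter_upwards [ae_forall_mulVec_apply_ne_zero (isUnit_nonsing_inv_iff.2 hN)] with y hy
  have hNy : N *ᵥ (N⁻¹ *ᵥ y.ofLp) = y.ofLp := by
    rw [mulVec_mulVec, mul_nonsing_inv _ hNdet, one_mulVec]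
  have henergy : h (N⁻¹ *ᵥ y.ofLp) = y.ofLp ⬝ᵥ Q *ᵥ y.ofLp := by rw [hh _ hy, hNy]
  refine propext ⟨?_, fun hy1 => ⟨_, hNy.symm, henergy.trans_le hy1⟩⟩
  rintro ⟨x, hx, hle⟩
  obtain rfl : x = N⁻¹ *ᵥ y.ofLp := by
    rw [hx, mulVec_mulVec, nonsing_inv_mul _ hNdet, one_mulVec]
  exact henergy.symm.trans_le hle

end Volume

section Trajectories

/-- State–input trajectories `(x, u)` over the horizon `0, …, T - 1`: the ambient space `V`. -/
abbrev Trajectory (n m R : Type*) (T : ℕ) := (Fin T → n → R) × (Fin T → m → R)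

/-- Extension of a length-`T` signal to all times by the value `0`. For a state trajectory the
appended value at time `T` is the terminal condition `x(T) = 0`. -/
noncomputable def zeroExtend (R : Type*) {E : Type*} [Semiring R] [AddCommMonoid E] [Module R E]
    (T : ℕ) : (Fin T → E) →ₗ[R] ℕ → E where
  toFun v := Function.extend Fin.val v 0
  map_add' v w := by rw [← Function.extend_add, add_zero]
  map_smul' c v := by rw [RingHom.id_apply, ← Function.extend_smul, smul_zero]

section ZeroExtend

variable {R E : Type*} [Semiring R] [AddCommMonoid E] [Module R E] {T : ℕ} (v : Fin T → E)

theorem zeroExtend_of_lt {t : ℕ} (ht : t < T) : zeroExtend R T v t = v ⟨t, ht⟩ :=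
  Fin.val_injective.extend_apply v 0 ⟨t, ht⟩

theorem zeroExtend_self : zeroExtend R T v T = 0 :=
  Function.extend_apply' _ _ _ fun ⟨t, ht⟩ => t.isLt.ne ht

end ZeroExtend

/-- The initial state `x(0)` of a trajectory, with value `0` on the empty horizon `T = 0`. -/
noncomputable def initialState (n m R : Type*) [Semiring R] (T : ℕ) :
    Trajectory n m R T →ₗ[R] n → R :=
  LinearMap.proj 0 ∘ₗ zeroExtend R T ∘ₗ LinearMap.fst R _ _

/-- The trajectories satisfying the support constraint `P`: their coordinates indexed by `P`
are zero. -/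
def supportConstraint {n m : Type*} (R : Type*) [Semiring R] {T : ℕ}
    (P : Set ((Fin T × n) ⊕ (Fin T × m))) :
    Submodule R (Trajectory n m R T) where
  carrier := {s | ∀ c ∈ P, Sum.elim (fun p => s.1 p.1 p.2) (fun p => s.2 p.1 p.2) c = 0}
  add_mem' {a b} ha hb := by
    rintro (p | p) hp
    · simpa using congrArg₂ (· + ·) (ha _ hp) (hb _ hp)
    · simpa using congrArg₂ (· + ·) (ha _ hp) (hb _ hp)
  zero_mem' := by rintro (p | p) - <;> rfl
  smul_mem' r a ha := by
    rintro (p | p) hp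
    · exact mul_eq_zero_of_right r (ha _ hp)
    · exact mul_eq_zero_of_right r (ha _ hp)

variable {n m R : Type*} [Fintype n] [Fintype m] [CommSemiring R] {T : ℕ}

/-- The state–input trajectories of `x(t+1) = A x(t) + B u(t)` that reach `0` at time `T`, from
any initial state. -/
def steeringTrajectories (A : Matrix n n R) (B : Matrix n m R) (T : ℕ) :
    Submodule R (Trajectory n m R T) where
  carrier := {s | ∀ t < T, zeroExtend R T s.1 (t + 1) =
    A *ᵥ zeroExtend R T s.1 t + B *ᵥ zeroExtend R T s.2 t}
  add_mem' {a b} ha hb t ht := by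
    simp only [Prod.fst_add, Prod.snd_add, map_add, Pi.add_apply, ha t ht, hb t ht, mulVec_add]
    abel
  zero_mem' t _ := by simp
  smul_mem' c a ha t ht := by
    simp only [Prod.smul_fst, Prod.smul_snd, map_smul, Pi.smul_apply, ha t ht, mulVec_smul,
      smul_add]

/-- The unconstrained feasible set `S(x₀)` of trajectories steering `x₀` to `0` in `T` steps. -/
def feasibleSet (A : Matrix n n R) (B : Matrix n m R) (T : ℕ) (x₀ : n → R) :
    Set (Trajectory n m R T) :=
  {s | s ∈ steeringTrajectories A B T ∧ initialState n m R T s = x₀}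

/-- The set `S(0)` as a subspace: the directions in which a feasible trajectory can be changed. -/
noncomputable def feasibleDirections (A : Matrix n n R) (B : Matrix n m R) (T : ℕ) :
    Submodule R (Trajectory n m R T) :=
  steeringTrajectories A B T ⊓ (initialState n m R T).ker

variable (A : Matrix n n R) (B : Matrix n m R)

theorem coe_feasibleDirections :
    (feasibleDirections A B T : Set (Trajectory n m R T)) = feasibleSet A B T 0 := rfl

theorem feasibleSet_eq (hT : 1 ≤ T) (x₀ : n → R) :
    feasibleSet A B T x₀ = {s |
      s.1 ⟨0, hT⟩ = x₀ ∧
      (∀ t : ℕ, (ht : t + 1 < T) → s.1 ⟨t + 1, ht⟩ =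
        A *ᵥ s.1 ⟨t, Nat.lt_of_succ_lt ht⟩ + B *ᵥ s.2 ⟨t, Nat.lt_of_succ_lt ht⟩) ∧
      A *ᵥ s.1 ⟨T - 1, Nat.sub_one_lt_of_lt hT⟩ +
        B *ᵥ s.2 ⟨T - 1, Nat.sub_one_lt_of_lt hT⟩ = 0} := by
  ext s
  have hinit : initialState n m R T s = s.1 ⟨0, hT⟩ := zeroExtend_of_lt (R := R) _ _
  have hfinal : T - 1 + 1 = T := by omega
  constructor
  · rintro ⟨hs, hx₀⟩
    refine ⟨hinit ▸ hx₀, fun t ht => ?_, ?_⟩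
    · simpa only [zeroExtend_of_lt, ht, Nat.lt_of_succ_lt ht] using hs t (by omega)
    · have hlast := hs (T - 1) (by omega)
      rw [hfinal, zeroExtend_self, zeroExtend_of_lt _ (by omega),
        zeroExtend_of_lt _ (by omega)] at hlast
      exact hlast.symm
  · rintro ⟨hx₀, hstep, hlast⟩
    refine ⟨fun t ht => ?_, hinit.trans hx₀⟩
    rw [zeroExtend_of_lt _ ht, zeroExtend_of_lt _ ht]
    rcases Nat.lt_or_ge (t + 1) T with ht' | ht'
    · rw [zeroExtend_of_lt _ ht', hstep t ht']
    · obtain rfl : t = T - 1 := by omega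
      rw [hfinal, zeroExtend_self, hlast]

variable [DecidableEq n]

/-- The constrained feasible set `T(x₀)`, for arbitrary linear constraints: the `i`-th column is
required to lie in the subspace `M i`. -/
def constrainedFeasibleSet (M : n → Submodule R (Trajectory n m R T)) (x₀ : n → R) :
    Set (Trajectory n m R T) :=
  {s | ∃ f : n → Trajectory n m R T,
    (∀ i, f i ∈ feasibleSet A B T (Pi.single i 1) ∩ M i) ∧ s = ∑ i, x₀ i • f i}

/-- The matrix `[A^(T-1) B, …, A B, B]` taking the stacked inputs to the state they produce at
time `T` from rest; its columns are indexed by pairs of a time and an input channel. -/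
def reachabilityMatrix (T : ℕ) : Matrix n (Fin T × m) R :=
  of fun i p => (A ^ (p.1.rev : ℕ) * B) i p.2

theorem reachabilityMatrix_mulVec (u : Fin T × m → R) :
    reachabilityMatrix A B T *ᵥ u =
      ∑ t : Fin T, (A ^ (t.rev : ℕ) * B) *ᵥ fun j => u (t, j) := by
  ext i
  simp only [mulVec, dotProduct, reachabilityMatrix, of_apply, Fintype.sum_prod_type,
    Finset.sum_apply]

/-- The controllability Gramian `W_c` over the horizon `T`. -/
def controllabilityGramian (T : ℕ) : Matrix n n R :=
  ∑ k ∈ range T, A ^ k * B * Bᵀ * Aᵀ ^ k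

theorem reachabilityMatrix_mul_transpose :
    reachabilityMatrix A B T * (reachabilityMatrix A B T)ᵀ =
      controllabilityGramian A B T := by
  rw [controllabilityGramian, sum_range, ← Equiv.sum_comp Fin.revPerm]
  ext i j
  simp only [mul_apply (M := reachabilityMatrix A B T), Fintype.sum_prod_type, Matrix.sum_apply,
    Fin.revPerm_apply, Matrix.mul_assoc _ Bᵀ, ← transpose_pow, ← transpose_mul]
  rfl

variable {A B}

theorem feasibleSet_nonempty_of_columns
    (hcolumns : ∀ i, (feasibleSet A B T (Pi.single i 1)).Nonempty) (x₀ : n → R) :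
    (feasibleSet A B T x₀).Nonempty := by
  choose f hf using hcolumns
  exact ⟨_, sum_smul_mem_and_map_eq hf x₀⟩

theorem state_eq_pow_mulVec_add_sum {x : ℕ → n → R} {u : ℕ → m → R}
    (hx : ∀ t < T, x (t + 1) = A *ᵥ x t + B *ᵥ u t) :
    x T = A ^ T *ᵥ x 0 + ∑ t : Fin T, (A ^ (t.rev : ℕ) * B) *ᵥ u t := by
  induction T with
  | zero => simp
  | succ T ih =>
    rw [hx T (by omega), ih fun t ht => hx t (by omega), Fin.sum_univ_castSucc, mulVec_add,
      mulVec_mulVec, ← pow_succ', mulVec_sum]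
    simp only [Fin.rev_castSucc, Fin.val_succ, Fin.rev_last, Fin.val_zero, pow_zero,
      Matrix.one_mul, Fin.val_castSucc, Fin.val_last, mulVec_mulVec, pow_succ',
      Matrix.mul_assoc, add_assoc]

theorem exists_state_mem_feasibleSet_iff {x₀ : n → R} {u : Fin T → m → R} :
    (∃ x, (x, u) ∈ feasibleSet A B T x₀) ↔
      A ^ T *ᵥ x₀ + reachabilityMatrix A B T *ᵥ (fun p => u p.1 p.2) = 0 := by
  have hinputs : reachabilityMatrix A B T *ᵥ (fun p => u p.1 p.2) =
      ∑ t : Fin T, (A ^ (t.rev : ℕ) * B) *ᵥ zeroExtend R T u t := by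
    simp only [reachabilityMatrix_mulVec, zeroExtend_of_lt, Fin.is_lt, Fin.eta]
  rw [hinputs]
  constructor
  · rintro ⟨x, hx, rfl⟩
    exact (state_eq_pow_mulVec_add_sum hx).symm.trans (zeroExtend_self x)
  · intro hreach
    let x : ℕ → n → R := Nat.rec x₀ fun t xt => A *ᵥ xt + B *ᵥ zeroExtend R T u t
    have hxT : x T = 0 := (state_eq_pow_mulVec_add_sum fun _ _ => rfl).trans hreach
    have hextend {t : ℕ} (ht : t ≤ T) : zeroExtend R T (fun s : Fin T => x s) t = x t := by
      rcases ht.lt_or_eq with ht | rfl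
      · exact zeroExtend_of_lt _ ht
      · rw [zeroExtend_self, hxT]
    exact ⟨fun t => x t, fun t ht => by rw [hextend ht, hextend ht.le], hextend T.zero_le⟩

end Trajectories

section ControlEnergy

variable {n m : Type*} [Fintype m] {T : ℕ}

/-- The control energy `∑ₜ ‖u(t)‖²` of a trajectory. -/
def controlEnergy (s : Trajectory n m ℝ T) : ℝ :=
  ∑ t, ∑ j, s.2 t j ^ 2

theorem controlEnergy_eq_dotProduct (s : Trajectory n m ℝ T) :
    controlEnergy s = (fun p : Fin T × m => s.2 p.1 p.2) ⬝ᵥ fun p => s.2 p.1 p.2 := by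
  simp only [controlEnergy, dotProduct, Fintype.sum_prod_type, sq]

variable [Fintype n] [DecidableEq n] {A : Matrix n n ℝ} {B : Matrix n m ℝ}

theorem isLeast_controlEnergy_feasibleSet (hW : IsUnit (controllabilityGramian A B T).det)
    (x₀ : n → ℝ) :
    IsLeast {e | ∃ s ∈ feasibleSet A B T x₀, e = controlEnergy s}
      ((A ^ T *ᵥ x₀) ⬝ᵥ (controllabilityGramian A B T)⁻¹ *ᵥ (A ^ T *ᵥ x₀)) := by
  rw [← reachabilityMatrix_mul_transpose] at hW ⊢
  have hleast := isLeast_dotProduct_self_of_mulVec_eq hW (-(A ^ T *ᵥ x₀))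
  rw [mulVec_neg, neg_dotProduct_neg] at hleast
  convert hleast using 1
  ext e
  constructor
  · rintro ⟨⟨x, u⟩, hs, rfl⟩
    exact ⟨_, eq_neg_of_add_eq_zero_right (exists_state_mem_feasibleSet_iff.1 ⟨x, hs⟩),
      controlEnergy_eq_dotProduct (x, u)⟩
  · rintro ⟨v, hv, rfl⟩
    obtain ⟨x, hx⟩ := (exists_state_mem_feasibleSet_iff (u := fun t j => v (t, j))).2
      (add_eq_zero_iff_eq_neg'.2 hv)
    exact ⟨_, hx, (controlEnergy_eq_dotProduct (x, fun t j => v (t, j))).symm⟩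

theorem posDef_controllabilityGramian (hA : IsUnit A.det)
    (hfeasible : ∀ x₀, (feasibleSet A B T x₀).Nonempty) :
    (controllabilityGramian A B T).PosDef := by
  rw [← reachabilityMatrix_mul_transpose]
  refine posDef_mul_transpose_self_of_mulVec_surjective fun y => ?_
  obtain ⟨x₀, hx₀⟩ : ∃ x₀, A ^ T *ᵥ x₀ = -y :=
    mulVec_surjective_iff_isUnit.2 (((isUnit_iff_isUnit_det A).2 hA).pow T) (-y)
  obtain ⟨⟨x, u⟩, hs⟩ := hfeasible x₀
  refine ⟨fun p => u p.1 p.2, ?_⟩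
  rw [eq_neg_of_add_eq_zero_right (exists_state_mem_feasibleSet_iff.1 ⟨x, hs⟩), hx₀, neg_neg]

end ControlEnergy

section Constrained

variable {n m : Type*} [Fintype n] [DecidableEq n] [Fintype m] {T : ℕ}

theorem constrainedFeasibleSet_eq_feasibleSet {𝕜 : Type*} [Field 𝕜] {A : Matrix n n 𝕜}
    {B : Matrix n m 𝕜} {M : n → Submodule 𝕜 (Trajectory n m 𝕜 T)}
    (hcolumns : ∀ i, (feasibleSet A B T (Pi.single i 1) ∩ M i).Nonempty)
    (hdirections : ⨆ i, feasibleDirections A B T ⊓ M i = feasibleDirections A B T)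
    {x₀ : n → 𝕜} (hx₀ : ∀ i, x₀ i ≠ 0) :
    constrainedFeasibleSet A B M x₀ = feasibleSet A B T x₀ :=
  Set.ext fun _ => exists_columns_eq_sum_smul_iff hcolumns hdirections.ge hx₀

/-- The constrained minimum control energy `h_T(x₀)`; it has the junk value `0` when `T(x₀)` is
empty. -/
noncomputable def constrainedMinEnergy (A : Matrix n n ℝ) (B : Matrix n m ℝ)
    (M : n → Submodule ℝ (Trajectory n m ℝ T)) (x₀ : n → ℝ) : ℝ :=
  sInf {e | ∃ s ∈ constrainedFeasibleSet A B M x₀, e = controlEnergy s}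

end Constrained

theorem constrained_controllability_equals_classical_general {n m : Type*} [Fintype n]
    [DecidableEq n] [Fintype m] {T : ℕ} {A : Matrix n n ℝ} {B : Matrix n m ℝ}
    {M : n → Submodule ℝ (Trajectory n m ℝ T)}
    (hcolumns : ∀ i, (feasibleSet A B T (Pi.single i 1) ∩ M i).Nonempty)
    (hrank : Module.finrank ℝ ↥(⨆ i, feasibleDirections A B T ⊓ M i) =
      Module.finrank ℝ (feasibleDirections A B T))
    (hA : IsUnit A.det) :
    volume {y : EuclideanSpace ℝ n |
        ∃ x₀, y.ofLp = A ^ T *ᵥ x₀ ∧ constrainedMinEnergy A B M x₀ ≤ 1} =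
      ENNReal.ofReal √(controllabilityGramian A B T).det *
        volume (Metric.closedBall (0 : EuclideanSpace ℝ n) 1) := by
  have hdirections : ⨆ i, feasibleDirections A B T ⊓ M i = feasibleDirections A B T :=
    Submodule.eq_of_le_of_finrank_eq (iSup_le fun _ => inf_le_left) hrank
  have hW : (controllabilityGramian A B T).PosDef :=
    posDef_controllabilityGramian hA (feasibleSet_nonempty_of_columns fun i => (hcolumns i).left)
  have henergy (x₀ : n → ℝ) (hx₀ : ∀ i, x₀ i ≠ 0) : constrainedMinEnergy A B M x₀ =
      (A ^ T *ᵥ x₀) ⬝ᵥ (controllabilityGramian A B T)⁻¹ *ᵥ (A ^ T *ᵥ x₀) := by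
    rw [constrainedMinEnergy, constrainedFeasibleSet_eq_feasibleSet hcolumns hdirections hx₀]
    exact (isLeast_controlEnergy_feasibleSet hW.det_pos.ne'.isUnit x₀).csInf_eq
  rw [volume_mulVec_image_sublevel_of_eq_dotProduct
      (((isUnit_iff_isUnit_det A).2 hA).pow T) hW.inv henergy,
    det_nonsing_inv, Ring.inverse_eq_inv', Real.sqrt_inv, inv_inv]

/-- Corollary 1, controllability form `V_c = Y_c²`: under feasibility of
each `C_i`, the rank condition `dim (K_1 + … + K_{Nx}) = dim S(0)`, invertibility of `A`
and of the Gramian `W_c`, the Lebesgue volume of `{ A^T x0 : h_T(x0) ≤ 1 }` — where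
`h_T(x0)` is the minimum control energy over the constrained feasible set `T(x0)` —
equals `√(det W_c)` times the volume of the Euclidean unit ball, i.e. `Y_c² = det W_c = V_c`. -/
theorem constrained_controllability_equals_classical {Nx Nu T : ℕ} (hT : 1 ≤ T)
    (A : Matrix (Fin Nx) (Fin Nx) ℝ) (B : Matrix (Fin Nx) (Fin Nu) ℝ)
    (S : (Fin Nx → ℝ) → Set ((Fin T → Fin Nx → ℝ) × (Fin T → Fin Nu → ℝ)))
    (hS : ∀ x0 : Fin Nx → ℝ, S x0 = { su |
        su.1 ⟨0, by omega⟩ = x0 ∧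
        (∀ t : ℕ, (ht : t + 1 < T) →
          su.1 ⟨t + 1, ht⟩ =
            A.mulVec (su.1 ⟨t, by omega⟩) + B.mulVec (su.2 ⟨t, by omega⟩)) ∧
        A.mulVec (su.1 ⟨T - 1, by omega⟩) + B.mulVec (su.2 ⟨T - 1, by omega⟩) = 0 })
    (R : Fin Nx → Set ((Fin T × Fin Nx) ⊕ (Fin T × Fin Nu)))
    (coord : ((Fin T → Fin Nx → ℝ) × (Fin T → Fin Nu → ℝ)) →
      ((Fin T × Fin Nx) ⊕ (Fin T × Fin Nu)) → ℝ)
    (hcoord : ∀ su c, coord su c =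
      Sum.elim (fun p : Fin T × Fin Nx => su.1 p.1 p.2)
        (fun p : Fin T × Fin Nu => su.2 p.1 p.2) c)
    (C : Fin Nx → Set ((Fin T → Fin Nx → ℝ) × (Fin T → Fin Nu → ℝ)))
    (hC : ∀ i, C i = { s ∈ S (Pi.single i 1) | ∀ c ∈ R i, coord s c = 0 })
    (K : Fin Nx → Set ((Fin T → Fin Nx → ℝ) × (Fin T → Fin Nu → ℝ)))
    (hK : ∀ i, K i = { k ∈ S 0 | ∀ c ∈ R i, coord k c = 0 })
    (Tset : (Fin Nx → ℝ) → Set ((Fin T → Fin Nx → ℝ) × (Fin T → Fin Nu → ℝ)))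
    (hTset : ∀ x0 : Fin Nx → ℝ, Tset x0 = { s |
        ∃ f : Fin Nx → (Fin T → Fin Nx → ℝ) × (Fin T → Fin Nu → ℝ),
          (∀ i, f i ∈ C i) ∧ s = ∑ i : Fin Nx, x0 i • f i })
    (hCne : ∀ i, (C i).Nonempty)
    (hrank : Module.finrank ℝ (Submodule.span ℝ (⋃ i : Fin Nx, K i))
      = Module.finrank ℝ (Submodule.span ℝ (S 0)))
    (hA : IsUnit A.det)
    (Wc : Matrix (Fin Nx) (Fin Nx) ℝ)
    (hWc : Wc = ∑ i ∈ Finset.range T, A ^ i * B * Bᵀ * Aᵀ ^ i)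
    (hWcInv : IsUnit Wc.det)
    (hTfun : (Fin Nx → ℝ) → ℝ)
    (hhT : ∀ x0 : Fin Nx → ℝ, hTfun x0 = sInf
      { e : ℝ | ∃ su ∈ Tset x0, e = ∑ t : Fin T, ∑ j : Fin Nu, su.2 t j ^ 2 }) :
    volume { y : EuclideanSpace ℝ (Fin Nx) |
        ∃ x0 : Fin Nx → ℝ, (fun i => y i) = (A ^ T).mulVec x0 ∧ hTfun x0 ≤ 1 }
      = ENNReal.ofReal (Real.sqrt Wc.det) *
        volume (Metric.closedBall (0 : EuclideanSpace ℝ (Fin Nx)) 1) := by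
  obtain rfl : S = feasibleSet A B T :=
    funext fun x₀ => (hS x₀).trans (feasibleSet_eq A B hT x₀).symm
  obtain rfl : coord = fun su => Sum.elim (fun p => su.1 p.1 p.2) fun p => su.2 p.1 p.2 :=
    funext₂ hcoord
  obtain rfl : C = fun i => feasibleSet A B T (Pi.single i 1) ∩ supportConstraint ℝ (R i) :=
    funext hC
  obtain rfl : K = fun i => ↑(feasibleDirections A B T ⊓ supportConstraint ℝ (R i)) := funext hK
  obtain rfl : Tset = constrainedFeasibleSet A B fun i => supportConstraint ℝ (R i) :=
    funext hTset
  obtain rfl : hTfun = constrainedMinEnergy A B fun i => supportConstraint ℝ (R i) := funext hhT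
  rw [← Submodule.iSup_eq_span, ← coe_feasibleDirections, Submodule.span_eq] at hrank
  exact hWc ▸ constrained_controllability_equals_classical_general hCne hrank hA
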